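/- For every nonnegative integer k: the group W is finite, and in the group algebra ℤ[ℤ^7] one has 𝒜(Z^ϱ) · WGF(L7(k);Z) = 𝒜(Z^{kω_1 + ϱ}). (By the Weyl character formula, this says that the weight generating function of L7(k) equals the character char_{E7}(kω_1) of the irreducible highest-weight-kω_1 representation of the type E7 simple Lie algebra.) -/

import Mathlib

noncomputable section

namespace CL

variable {N : Type} [DecidableEq N] [Fintype N]

/-- One-step relation generating the partial order on the poset of positions. -/
def step (adj : N → N → Prop) (pos : Finset (N × ℕ)) (x y : N × ℕ) : Prop :=
  x ∈ pos ∧ y ∈ pos ∧ adj x.1 y.1 ∧ y.2 = x.2 + 1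

/-- The partial order on positions, generated by `step`. -/
def ple (adj : N → N → Prop) (pos : Finset (N × ℕ)) : N × ℕ → N × ℕ → Prop :=
  Relation.ReflTransGen (step adj pos)

/-- The lattice of `ℕ`-labellings of the positions which are bounded by `k`, order-reversing,
and satisfy a further constraint `extra`. -/
def Elt (adj : N → N → Prop) (pos : Finset (N × ℕ)) (k : ℕ)
    (extra : ({x : N × ℕ // x ∈ pos} → ℕ) → Prop) : Type :=
  {c : {x : N × ℕ // x ∈ pos} → ℕ //
    (∀ x, c x ≤ k) ∧ (∀ x y, ple adj pos y.1 x.1 → c x ≤ c y) ∧ extra c}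

variable {adj : N → N → Prop} {pos : Finset (N × ℕ)} {k : ℕ}
  {extra : ({x : N × ℕ // x ∈ pos} → ℕ) → Prop}

instance : Finite (Elt adj pos k extra) := by
  apply Finite.of_injective
    (fun c : Elt adj pos k extra =>
      fun x => (⟨c.1 x, Nat.lt_succ_of_le (c.2.1 x)⟩ : Fin (k + 1)))
  intro c d h
  apply Subtype.ext
  funext x
  exact congrArg Fin.val (congrFun h x)

instance : Fintype (Elt adj pos k extra) := Fintype.ofFinite _

instance : DecidableEq (Elt adj pos k extra) := by unfold Elt; infer_instance

/-- Componentwise comparison of labellings. -/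
def elLe (r s : Elt adj pos k extra) : Prop := ∀ x, r.1 x ≤ s.1 x

/-- The covering edge of color `i`: exactly one entry, at a position of color `i`,
is increased by one. -/
def edge (i : N) (r s : Elt adj pos k extra) : Prop :=
  ∃ x : {x : N × ℕ // x ∈ pos}, x.1.1 = i ∧ s.1 x = r.1 x + 1 ∧
    ∀ y, y ≠ x → s.1 y = r.1 y

instance (i : N) (r s : Elt adj pos k extra) : Decidable (edge i r s) := by
  unfold edge; infer_instance

/-- The rank function: the sum of all entries. -/
def rk (t : Elt adj pos k extra) : ℕ := ∑ x ∈ pos.attach, t.1 x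

/-- The connected component of `t` in the graph of color-`i` covering edges. -/
def comp (i : N) (t : Elt adj pos k extra) : Set (Elt adj pos k extra) :=
  {s | Relation.ReflTransGen (fun a b => edge i a b ∨ edge i b a) t s}

/-- The integer `m_i(t) = (ρ(t) − min ρ on comp_i(t)) − (max ρ on comp_i(t) − ρ(t))`. -/
def mwt (i : N) (t : Elt adj pos k extra) : ℤ :=
  ((rk t : ℤ) - ((sInf (rk '' comp i t) : ℕ) : ℤ)) -
    (((sSup (rk '' comp i t) : ℕ) : ℤ) - (rk t : ℤ))

end CL

namespace CL

variable {N : Type} [DecidableEq N] [Fintype N]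

/-- The matrix of the simple reflection `S_i : μ ↦ μ − μ_i·(row i of A)`, acting via `mulVec`. -/
def refl (A : N → N → ℤ) (i : N) : Matrix N N ℤ :=
  fun j l => (if j = l then 1 else 0) - (if l = i then A i j else 0)

/-- The Weyl group: the group of integer matrices generated by the simple reflections
(each `S_i` is an involution, so the generated submonoid is a group). -/
def weyl (A : N → N → ℤ) : Submonoid (Matrix N N ℤ) :=
  Submonoid.closure (Set.range (refl A))

/-- The alternant `𝒜(Z^ν) = Σ_{w∈W} det(w)·Z^{w(ν)}` in the group algebra `ℤ[ℤ^N]`. -/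
def alt (A : N → N → ℤ) (ν : N → ℤ) : AddMonoidAlgebra ℤ (N → ℤ) :=
  ∑ᶠ w ∈ (weyl A : Set (Matrix N N ℤ)),
    AddMonoidAlgebra.single (Matrix.mulVec w ν) (Matrix.det w)

end CL

namespace CL

variable {N : Type} [DecidableEq N] [Fintype N]

/-- The weight generating function `WGF(L;Z) = Σ_{t∈L} Z^{wt(t)}` in `ℤ[ℤ^N]`. -/
def wgf (adj : N → N → Prop) (pos : Finset (N × ℕ)) (k : ℕ)
    (extra : ({x : N × ℕ // x ∈ pos} → ℕ) → Prop) : AddMonoidAlgebra ℤ (N → ℤ) :=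
  ∑ t : Elt adj pos k extra, AddMonoidAlgebra.single (fun i => mwt i t) 1

end CL

/-! ### Type `E₇` data -/

/-- The nodes `1, 2, 3, 4, 5, 5', 6'` of the `E₇` Dynkin diagram. -/
inductive N7 : Type
  | n1 | n2 | n3 | n4 | n5 | n5p | n6p
  deriving DecidableEq

instance instFintypeN7 : Fintype N7 where
  elems := {N7.n1, N7.n2, N7.n3, N7.n4, N7.n5, N7.n5p, N7.n6p}
  complete := by intro x; cases x <;> decide

open N7

/-- Adjacency in the `E₇` Dynkin diagram: edges `1-2, 2-3, 3-4, 4-5, 4-5', 5'-6'`. -/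
abbrev adj7 : N7 → N7 → Prop := fun a b =>
  (a, b) ∈ ([(n1, n2), (n2, n3), (n3, n4), (n4, n5), (n4, n5p), (n5p, n6p)] : List (N7 × N7)) ∨
  (b, a) ∈ ([(n1, n2), (n2, n3), (n3, n4), (n4, n5), (n4, n5p), (n5p, n6p)] : List (N7 × N7))

/-- The 27 (color, rank) positions of the minuscule poset `P₇ = P_{E₇}(ω₁)`. -/
def pos7 : Finset (N7 × ℕ) :=
  {(n1, 0), (n2, 1), (n3, 2), (n4, 3), (n5, 4), (n5p, 4), (n4, 5), (n6p, 5), (n3, 6),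
   (n5p, 6), (n2, 7), (n4, 7), (n1, 8), (n3, 8), (n5, 8), (n2, 9), (n4, 9), (n3, 10),
   (n5p, 10), (n4, 11), (n6p, 11), (n5, 12), (n5p, 12), (n4, 13), (n3, 14), (n2, 15), (n1, 16)}

/-- The lattice `L7(k) = L_{E₇}(kω₁)` of order-reversing labellings of `P₇` by `{0,…,k}`. -/
abbrev L7 (k : ℕ) : Type := CL.Elt adj7 pos7 k (fun _ => True)

/-- The Cartan matrix of type `E₇`, indexed by the nodes. -/
def A7 : N7 → N7 → ℤ := fun i j => if i = j then 2 else if adj7 i j then -1 else 0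

namespace E7P

/-! ### The poset `P₇` re-indexed by `Fin 27` (a linear extension) -/

/-- The positions, listed in order of rank. -/
def pt : Fin 27 → N7 × ℕ := ![(n1, 0), (n2, 1), (n3, 2), (n4, 3), (n5, 4), (n5p, 4), (n4, 5),
  (n6p, 5), (n3, 6), (n5p, 6), (n2, 7), (n4, 7), (n1, 8), (n3, 8), (n5, 8), (n2, 9), (n4, 9),
  (n3, 10), (n5p, 10), (n4, 11), (n6p, 11), (n5, 12), (n5p, 12), (n4, 13), (n3, 14), (n2, 15),
  (n1, 16)]

/-- The color of a position. -/
def col : Fin 27 → N7 := ![n1, n2, n3, n4, n5, n5p, n4, n6p, n3, n5p, n2, n4, n1, n3, n5, n2, n4,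
  n3, n5p, n4, n6p, n5, n5p, n4, n3, n2, n1]

/-- Upper covers. -/
def up : Fin 27 → List (Fin 27) := ![[1], [2], [3], [4, 5], [6], [6, 7], [8, 9], [9], [10, 11],
  [11], [12, 13], [13, 14], [15], [15, 16], [16], [17], [17, 18], [19], [19, 20], [21, 22], [22],
  [23], [23], [24], [25], [26], []]

/-- Lower covers. -/
def dn : Fin 27 → List (Fin 27) := ![[], [0], [1], [2], [3], [3], [4, 5], [5], [6], [6, 7], [8],
  [8, 9], [10], [10, 11], [11], [12, 13], [13, 14], [15, 16], [16], [17, 18], [18], [19], [19, 20],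
  [21, 22], [23], [24], [25]]

lemma pt_mem : ∀ x, pt x ∈ pos7 := by decide +kernel

lemma pt_fst : ∀ x, (pt x).1 = col x := by decide +kernel

lemma pt_inj : ∀ x y, pt x = pt y → x = y := by decide +kernel

lemma pt_surj : ∀ p ∈ pos7, ∃ x, pt x = p := by decide +kernel

lemma up_iff : ∀ x y, y ∈ up x ↔ (adj7 (pt x).1 (pt y).1 ∧ (pt y).2 = (pt x).2 + 1) := by
  decide +kernel

lemma dn_iff : ∀ x y, y ∈ dn x ↔ x ∈ up y := by decide +kernel

lemma up_col : ∀ x, ∀ y ∈ up x, col y ≠ col x := by decide +kernel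

lemma up_lt : ∀ x, ∀ y ∈ up x, x < y := by decide +kernel

/-- Reachability along upper covers, with fuel. -/
def reach : ℕ → Fin 27 → Fin 27 → Bool
  | 0, x, y => x == y
  | n + 1, x, y => x == y || (up x).any (fun z => reach n z y)

lemma chain_fact : ∀ x y, col x = col y → x < y →
    ∃ z ∈ up x, ∃ w ∈ dn y, reach 16 z w = true := by decide +kernel

/-- Order-reversing labellings bounded by `K`. -/
def Mono (K : ℕ) (a : Fin 27 → ℕ) : Prop :=
  (∀ x, a x ≤ K) ∧ ∀ x, ∀ y ∈ up x, a y ≤ a x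

/-- Least possible value at `x`. -/
def lo (a : Fin 27 → ℕ) (x : Fin 27) : ℕ := ((up x).map a).foldr max 0

/-- Greatest possible value at `x`. -/
def hi (K : ℕ) (a : Fin 27 → ℕ) (x : Fin 27) : ℕ := ((dn x).map a).foldr min K

lemma foldr_max_le (l : List (Fin 27)) (a : Fin 27 → ℕ) (b : ℕ) :
    (l.map a).foldr max 0 ≤ b ↔ ∀ y ∈ l, a y ≤ b := by
  induction l with
  | nil => simp
  | cons h t ih => simp [ih]

lemma le_foldr_min (l : List (Fin 27)) (a : Fin 27 → ℕ) (K b : ℕ) :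
    b ≤ (l.map a).foldr min K ↔ b ≤ K ∧ ∀ y ∈ l, b ≤ a y := by
  induction l with
  | nil => simp
  | cons h t ih => simp [ih]; tauto

lemma lo_le {a : Fin 27 → ℕ} {x : Fin 27} {b : ℕ} : lo a x ≤ b ↔ ∀ y ∈ up x, a y ≤ b :=
  foldr_max_le _ _ _

lemma le_hi {K : ℕ} {a : Fin 27 → ℕ} {x : Fin 27} {b : ℕ} :
    b ≤ hi K a x ↔ b ≤ K ∧ ∀ y ∈ dn x, b ≤ a y := le_foldr_min _ _ _ _

lemma le_lo {a : Fin 27 → ℕ} {x y : Fin 27} (h : y ∈ up x) : a y ≤ lo a x :=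
  lo_le.1 le_rfl y h

lemma hi_le {K : ℕ} {a : Fin 27 → ℕ} {x y : Fin 27} (h : y ∈ dn x) : hi K a x ≤ a y :=
  (le_hi.1 le_rfl).2 y h

lemma hi_le_K {K : ℕ} {a : Fin 27 → ℕ} {x : Fin 27} : hi K a x ≤ K :=
  (le_hi.1 le_rfl).1

lemma Mono.lo_le {K : ℕ} {a : Fin 27 → ℕ} (h : Mono K a) (x : Fin 27) : lo a x ≤ a x :=
  E7P.lo_le.2 (h.2 x)

lemma Mono.le_hi {K : ℕ} {a : Fin 27 → ℕ} (h : Mono K a) (x : Fin 27) : a x ≤ hi K a x :=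
  E7P.le_hi.2 ⟨h.1 x, fun y hy => h.2 y x ((dn_iff x y).1 hy)⟩

lemma lo_congr {a b : Fin 27 → ℕ} {i : N7} (h : ∀ x, col x ≠ i → a x = b x) {x : Fin 27}
    (hx : col x = i) : lo a x = lo b x := by
  unfold lo
  congr 1
  apply List.map_congr_left
  intro y hy
  exact h y (fun e => up_col x y hy (e.trans hx.symm))

lemma hi_congr {K : ℕ} {a b : Fin 27 → ℕ} {i : N7} (h : ∀ x, col x ≠ i → a x = b x) {x : Fin 27}
    (hx : col x = i) : hi K a x = hi K b x := by
  unfold hi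
  congr 1
  apply List.map_congr_left
  intro y hy
  exact h y (fun e => up_col y x ((dn_iff x y).1 hy) (hx.trans e.symm))

/-- The weight of a labelling, as a linear expression. -/
def wtv (K : ℕ) (a : Fin 27 → ℕ) : N7 → ℤ := fun i =>
  ∑ x, (a x : ℤ) * A7 (col x) i - if i = n1 then (K : ℤ) else 0

/-- The local terms of the weight. -/
lemma wtv_eq {K : ℕ} {a : Fin 27 → ℕ} (h : Mono K a) (i : N7) :
    wtv K a i = ∑ x, if col x = i then (2 * (a x : ℤ) - lo a x - hi K a x) else 0 := by
  have hb := h.1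
  have mm : ∀ x y : Fin 27, max (a x : ℤ) (a y) + min (a x : ℤ) (a y) = a x + a y :=
    fun x y => max_add_min _ _
  have m1 := mm 4 5
  have m2 := mm 6 7
  have m3 := mm 8 9
  have m4 := mm 10 11
  have m5 := mm 12 13
  have m6 := mm 13 14
  have m7 := mm 15 16
  have m8 := mm 17 18
  have m9 := mm 19 20
  have m10 := mm 21 22
  unfold wtv
  cases i <;>
  · simp [Fin.sum_univ_succ, col, lo, hi, up, dn, A7, adj7, hb]
    linarith



/-! ### The color-`i` flip -/

/-- Reflect every value of color `i` in its allowed interval. -/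
def flip (K : ℕ) (i : N7) (a : Fin 27 → ℕ) : Fin 27 → ℕ := fun x =>
  if col x = i then lo a x + hi K a x - a x else a x

lemma flip_of_ne {K : ℕ} {i : N7} {a : Fin 27 → ℕ} {x : Fin 27} (h : col x ≠ i) :
    flip K i a x = a x := by simp [flip, h]

lemma flip_of_eq {K : ℕ} {i : N7} {a : Fin 27 → ℕ} {x : Fin 27} (h : col x = i) :
    flip K i a x = lo a x + hi K a x - a x := by simp [flip, h]

lemma flip_mono {K : ℕ} (i : N7) {a : Fin 27 → ℕ} (h : Mono K a) : Mono K (flip K i a) := by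
  constructor
  · intro x
    by_cases hx : col x = i
    · rw [flip_of_eq hx]
      have h1 := h.lo_le x
      have h3 := @hi_le_K K a x
      omega
    · rw [flip_of_ne hx]; exact h.1 x
  · intro x y hy
    by_cases hx : col x = i
    · have hyi : col y ≠ i := fun e => up_col x y hy (e.trans hx.symm)
      rw [flip_of_eq hx, flip_of_ne hyi]
      have h1 := h.le_hi x
      have h2 := le_lo (a := a) hy
      omega
    · rw [flip_of_ne hx]
      by_cases hyi : col y = i
      · rw [flip_of_eq hyi]
        have h1 := h.lo_le y
        have h2 := hi_le (K := K) (a := a) ((dn_iff y x).2 hy)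
        omega
      · rw [flip_of_ne hyi]; exact h.2 x y hy

lemma flip_flip {K : ℕ} (i : N7) {a : Fin 27 → ℕ} (h : Mono K a) :
    flip K i (flip K i a) = a := by
  funext x
  by_cases hx : col x = i
  · rw [flip_of_eq hx, lo_congr (b := a) (fun y hy => flip_of_ne hy) hx,
      hi_congr (b := a) (fun y hy => flip_of_ne hy) hx, flip_of_eq hx]
    have h1 := h.lo_le x
    have h2 := h.le_hi x
    omega
  · rw [flip_of_ne hx, flip_of_ne hx]

lemma refl_mulVec (i : N7) (μ : N7 → ℤ) (j : N7) :
    (CL.refl A7 i).mulVec μ j = μ j - A7 i j * μ i := by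
  simp [Matrix.mulVec, dotProduct, CL.refl, sub_mul, Finset.sum_sub_distrib]

lemma wtv_flip {K : ℕ} (i : N7) {a : Fin 27 → ℕ} (h : Mono K a) :
    wtv K (flip K i a) = (CL.refl A7 i).mulVec (wtv K a) := by
  funext j
  rw [refl_mulVec, wtv_eq h i]
  have key : ∑ x, (flip K i a x : ℤ) * A7 (col x) j = ∑ x, (a x : ℤ) * A7 (col x) j
      - A7 i j * ∑ x, if col x = i then (2 * (a x : ℤ) - lo a x - hi K a x) else 0 := by
    rw [Finset.mul_sum, ← Finset.sum_sub_distrib]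
    apply Finset.sum_congr rfl
    intro x _
    by_cases hx : col x = i
    · rw [flip_of_eq hx, if_pos hx]
      have h1 := h.lo_le x
      have h2 := h.le_hi x
      rw [Nat.cast_sub (by omega), hx]
      push_cast
      ring
    · rw [flip_of_ne hx, if_neg hx]; ring
  unfold wtv
  rw [key]
  ring

/-! ### Zero-one labellings -/

lemma reach_le {K : ℕ} {a : Fin 27 → ℕ} (h : Mono K a) :
    ∀ n x y, reach n x y = true → a y ≤ a x := by
  intro n
  induction n with
  | zero => intro x y hxy; simp [reach] at hxy; rw [hxy]
  | succ n ih =>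
    intro x y hxy
    simp only [reach, Bool.or_eq_true, beq_iff_eq, List.any_eq_true] at hxy
    rcases hxy with rfl | ⟨z, hz, hzy⟩
    · exact le_rfl
    · exact (ih z y hzy).trans (h.2 x z hz)

lemma hi_le_lo {K : ℕ} {a : Fin 27 → ℕ} (h : Mono K a) {x y : Fin 27} (hc : col x = col y)
    (hxy : x < y) : hi K a y ≤ lo a x := by
  obtain ⟨z, hz, w, hw, hr⟩ := chain_fact x y hc hxy
  exact (hi_le hw).trans ((reach_le h _ _ _ hr).trans (le_lo hz))

lemma wtv_one_of {a : Fin 27 → ℕ} (h : Mono 1 a) {x : Fin 27} (h0 : lo a x = 0)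
    (h1 : hi 1 a x = 1) : wtv 1 a (col x) = 2 * (a x : ℤ) - 1 := by
  rw [wtv_eq h, Finset.sum_eq_single x]
  · simp [h0, h1]
  · intro y _ hyx
    by_cases hc : col y = col x
    · rw [if_pos hc]
      have a1 := h.lo_le y
      have a2 := h.le_hi y
      have a3 := @hi_le_K 1 a y
      have a4 := h.1 y
      rcases lt_or_gt_of_ne hyx with hl | hl
      · have := hi_le_lo h hc hl
        omega
      · have := hi_le_lo h hc.symm hl
        omega
    · rw [if_neg hc]
  · simp

lemma wtv_one_zero {a : Fin 27 → ℕ} (h : Mono 1 a) {i : N7}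
    (hn : ∀ x, col x = i → ¬ (lo a x = 0 ∧ hi 1 a x = 1)) : wtv 1 a i = 0 := by
  rw [wtv_eq h]
  apply Finset.sum_eq_zero
  intro y _
  by_cases hc : col y = i
  · rw [if_pos hc]
    have a1 := h.lo_le y
    have a2 := h.le_hi y
    have a3 := @hi_le_K 1 a y
    have a4 := h.1 y
    have := hn y hc
    omega
  · rw [if_neg hc]

lemma wtv_one_ge {a : Fin 27 → ℕ} (h : Mono 1 a) (i : N7) : -1 ≤ wtv 1 a i := by
  by_cases hn : ∀ x, col x = i → ¬ (lo a x = 0 ∧ hi 1 a x = 1)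
  · rw [wtv_one_zero h hn]; norm_num
  · push Not at hn
    obtain ⟨x, rfl, h0, h1⟩ := hn
    rw [wtv_one_of h h0 h1]; omega

lemma exists_up_of_neg {a : Fin 27 → ℕ} (h : Mono 1 a) {x : Fin 27}
    (hw : wtv 1 a (col x) < 0) (hx : a x = 1) : ∃ z ∈ up x, a z = 1 := by
  by_contra hn
  push Not at hn
  have h0 : lo a x = 0 := by
    rw [← Nat.le_zero, lo_le]
    intro y hy
    have := hn y hy
    have := h.1 y
    omega
  have h1 : hi 1 a x = 1 := by
    have := h.le_hi x
    have := @hi_le_K 1 a x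
    omega
  rw [wtv_one_of h h0 h1, hx] at hw
  norm_num at hw

lemma exists_neg {a : Fin 27 → ℕ} (h : Mono 1 a) (hne : ∃ x, a x ≠ 1) : ∃ i, wtv 1 a i < 0 := by
  classical
  have hf : (Finset.univ.filter (fun x => a x ≠ 1)).Nonempty := by
    obtain ⟨x, hx⟩ := hne
    exact ⟨x, by simp [hx]⟩
  obtain ⟨x, hx, hmin⟩ := Finset.exists_min_image _ id hf
  simp only [Finset.mem_filter, Finset.mem_univ, true_and, id] at hx hmin
  have hx0 : a x = 0 := by have := h.1 x; omega
  have h0 : lo a x = 0 := by have := h.lo_le x; omega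
  have h1 : hi 1 a x = 1 := by
    apply le_antisymm hi_le_K
    rw [le_hi]
    refine ⟨le_rfl, fun y hy => ?_⟩
    by_contra hlt
    have := hmin y (by omega)
    have := up_lt y x ((dn_iff x y).1 hy)
    omega
  exact ⟨col x, by rw [wtv_one_of h h0 h1, hx0]; norm_num⟩

/-! ### Truncation and the sign-reversing involution -/

lemma wtv_add {K L : ℕ} (a b : Fin 27 → ℕ) :
    wtv (K + L) (fun x => a x + b x) = wtv K a + wtv L b := by
  funext i
  simp only [wtv, Pi.add_apply]
  have : ∑ x, ((a x + b x : ℕ) : ℤ) * A7 (col x) i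
      = ∑ x, (a x : ℤ) * A7 (col x) i + ∑ x, (b x : ℤ) * A7 (col x) i := by
    rw [← Finset.sum_add_distrib]
    exact Finset.sum_congr rfl (fun x _ => by push_cast; ring)
  rw [this]
  split_ifs <;> push_cast <;> ring

/-- Part of the labelling above level `q`. -/
def pre (q : ℕ) (a : Fin 27 → ℕ) : Fin 27 → ℕ := fun x => a x - q

/-- Part of the labelling below level `q`. -/
def trunc (q : ℕ) (a : Fin 27 → ℕ) : Fin 27 → ℕ := fun x => min (a x) q

/-- The layer at level `q`. -/
def layer (q : ℕ) (a : Fin 27 → ℕ) : Fin 27 → ℕ := fun x => if q < a x then 1 else 0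

lemma trunc_mono {K : ℕ} {a : Fin 27 → ℕ} (h : Mono K a) (q : ℕ) : Mono q (trunc q a) :=
  ⟨fun _ => min_le_right _ _, fun x y hy => min_le_min_right _ (h.2 x y hy)⟩

lemma layer_mono {K : ℕ} {a : Fin 27 → ℕ} (h : Mono K a) (q : ℕ) : Mono 1 (layer q a) := by
  constructor
  · intro x; unfold layer; split_ifs <;> omega
  · intro x y hy
    have := h.2 x y hy
    unfold layer
    split_ifs <;> omega

/-- Weight of the part above level `q`. -/
def G (k : ℕ) (a : Fin 27 → ℕ) (q : ℕ) : N7 → ℤ := wtv (k - q) (pre q a)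

lemma G_succ {k : ℕ} {a : Fin 27 → ℕ} {q : ℕ} (hq : q < k) :
    G k a q = G k a (q + 1) + wtv 1 (layer q a) := by
  unfold G
  rw [← wtv_add]
  have : k - q = k - (q + 1) + 1 := by omega
  rw [this]
  congr 1
  funext x
  unfold pre layer
  split_ifs <;> omega

lemma G_top {k : ℕ} {a : Fin 27 → ℕ} (h : Mono k a) : G k a k = 0 := by
  funext i
  have : pre k a = fun _ => 0 := by
    funext x; have := h.1 x; unfold pre; omega
  simp [G, wtv, this]

/-- The reflected labelling. -/
def refl (q : ℕ) (i : N7) (a : Fin 27 → ℕ) : Fin 27 → ℕ := fun x =>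
  pre q a x + flip q i (trunc q a) x

/-- The level `q` and color `i` are admissible for reflecting. -/
def Good (k : ℕ) (a : Fin 27 → ℕ) (q : ℕ) (i : N7) : Prop :=
  q < k ∧ G k a q i < 0 ∧ ∀ r, q < r → r ≤ k → ∀ j, 0 ≤ G k a r j

lemma Good.layer_neg {k : ℕ} {a : Fin 27 → ℕ} {q : ℕ} {i : N7} (hg : Good k a q i) :
    wtv 1 (layer q a) i < 0 := by
  have h1 := congrFun (G_succ (a := a) hg.1) i
  have h2 := hg.2.2 (q + 1) (by omega) hg.1 i
  have h3 := hg.2.1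
  simp only [Pi.add_apply] at h1
  omega

lemma Good.eq_neg_one {k : ℕ} {a : Fin 27 → ℕ} {q : ℕ} {i : N7} (h : Mono k a)
    (hg : Good k a q i) : G k a q i = -1 := by
  have h1 := congrFun (G_succ (a := a) hg.1) i
  have h2 := hg.2.2 (q + 1) (by omega) hg.1 i
  have h3 := hg.2.1
  have h4 := wtv_one_ge (layer_mono h q) i
  simp only [Pi.add_apply] at h1
  omega

lemma Good.flip_trunc {k : ℕ} {a : Fin 27 → ℕ} {q : ℕ} {i : N7} (h : Mono k a)
    (hg : Good k a q i) {x : Fin 27} (hx : q < a x) : flip q i (trunc q a) x = q := by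
  have hm := trunc_mono h q
  have ht : trunc q a x = q := by unfold trunc; omega
  by_cases hc : col x = i
  · rw [flip_of_eq hc, ht]
    subst hc
    obtain ⟨z, hz, hz1⟩ := exists_up_of_neg (layer_mono h q) hg.layer_neg
      (by unfold layer; simp [hx])
    have hzq : q < a z := by
      by_contra hn
      simp [layer, hn] at hz1
    have h1 := le_lo (a := trunc q a) hz
    have h2 : trunc q a z = q := by unfold trunc; omega
    have h3 := hm.lo_le x
    have h4 := hm.le_hi x
    have h5 := @hi_le_K q (trunc q a) x
    omega
  · rw [flip_of_ne hc, ht]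

lemma Good.pre_refl {k : ℕ} {a : Fin 27 → ℕ} {q : ℕ} {i : N7} (h : Mono k a)
    (hg : Good k a q i) : pre q (refl q i a) = pre q a := by
  funext x
  unfold refl
  simp only [pre]
  by_cases hx : q < a x
  · rw [hg.flip_trunc h hx]; omega
  · have := (flip_mono i (trunc_mono h q)).1 x
    omega

lemma Good.trunc_refl {k : ℕ} {a : Fin 27 → ℕ} {q : ℕ} {i : N7} (h : Mono k a)
    (hg : Good k a q i) : trunc q (refl q i a) = flip q i (trunc q a) := by
  funext x
  unfold refl
  simp only [pre]
  rw [trunc]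
  by_cases hx : q < a x
  · rw [hg.flip_trunc h hx]; omega
  · have := (flip_mono i (trunc_mono h q)).1 x
    omega

lemma Good.refl_refl {k : ℕ} {a : Fin 27 → ℕ} {q : ℕ} {i : N7} (h : Mono k a)
    (hg : Good k a q i) : refl q i (refl q i a) = a := by
  funext x
  rw [refl, hg.pre_refl h, hg.trunc_refl h, flip_flip i (trunc_mono h q)]
  unfold pre trunc
  omega

lemma refl_mono {k : ℕ} {a : Fin 27 → ℕ} {q : ℕ} (i : N7) (hq : q ≤ k) (h : Mono k a) :
    Mono k (refl q i a) := by
  have hm := flip_mono i (trunc_mono h q)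
  constructor
  · intro x
    have := hm.1 x
    have := h.1 x
    unfold refl pre
    omega
  · intro x y hy
    have := hm.2 x y hy
    have := h.2 x y hy
    unfold refl pre
    omega

lemma Good.G_refl {k : ℕ} {a : Fin 27 → ℕ} {q : ℕ} {i : N7} (h : Mono k a)
    (hg : Good k a q i) {r : ℕ} (hr : q ≤ r) : G k (refl q i a) r = G k a r := by
  have hp := hg.pre_refl h
  unfold G
  congr 1
  funext x
  have := congrFun hp x
  unfold pre at this ⊢
  omega

lemma Good.refl_iff {k : ℕ} {a : Fin 27 → ℕ} {q : ℕ} {i : N7} (h : Mono k a)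
    (hg : Good k a q i) (j : N7) : Good k (refl q i a) q j ↔ Good k a q j := by
  unfold Good
  rw [hg.G_refl h le_rfl]
  refine and_congr_right fun _ => and_congr_right fun _ => ?_
  refine forall_congr' fun r => forall_congr' fun hr => ?_
  rw [hg.G_refl h hr.le]

lemma Good.level_unique {k : ℕ} {a : Fin 27 → ℕ} {q r : ℕ} {i j : N7} (h1 : Good k a q i)
    (h2 : Good k a r j) : q = r := by
  rcases lt_trichotomy q r with hl | hl | hl
  · have := h1.2.2 r hl h2.1.le j
    have := h2.2.1
    omega
  · exact hl
  · have := h2.2.2 q hl h1.1.le i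
    have := h1.2.1
    omega

lemma Good.wt {k : ℕ} {a : Fin 27 → ℕ} {q : ℕ} {i : N7} (h : Mono k a)
    (hg : Good k a q i) :
    (fun j => wtv k (refl q i a) j + 1) =
      (CL.refl A7 i).mulVec (fun j => wtv k a j + 1) := by
  have e1 : wtv k (refl q i a) = G k a q + wtv q (flip q i (trunc q a)) := by
    have := wtv_add (K := k - q) (L := q) (pre q a) (flip q i (trunc q a))
    rw [Nat.sub_add_cancel hg.1.le] at this
    exact this
  have e2 : wtv k a = G k a q + wtv q (trunc q a) := by
    have := wtv_add (K := k - q) (L := q) (pre q a) (trunc q a)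
    rw [Nat.sub_add_cancel hg.1.le] at this
    rw [G, ← this]
    congr 1
    funext x
    unfold pre trunc
    omega
  have e3 := hg.eq_neg_one h
  funext j
  rw [refl_mulVec, e1, e2, wtv_flip i (trunc_mono h q)]
  simp only [Pi.add_apply]
  rw [refl_mulVec, e3]
  ring

lemma exists_good {k : ℕ} {a : Fin 27 → ℕ} (h : Mono k a) (hne : a ≠ fun _ => k) :
    ∃ q i, Good k a q i := by
  classical
  have hx : ∃ x, a x ≠ k := by
    by_contra hn
    push Not at hn
    exact hne (funext hn)
  obtain ⟨x, hx⟩ := hx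
  have hxk : a x < k := lt_of_le_of_ne (h.1 x) hx
  have hl : ∃ y, layer (k - 1) a y ≠ 1 := ⟨x, by
    have : ¬ (k - 1 < a x) := by omega
    simp [layer, this]⟩
  obtain ⟨i, hi⟩ := exists_neg (layer_mono h (k - 1)) hl
  have hG : G k a (k - 1) i < 0 := by
    have h1 := congrFun (G_succ (a := a) (k := k) (q := k - 1) (by omega)) i
    rw [Nat.sub_add_cancel (by omega), G_top h] at h1
    simp only [Pi.add_apply, Pi.zero_apply] at h1
    omega
  refine ⟨k - 1, i, by omega, hG, fun r h1 h2 j => ?_⟩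
  have : r = k := by omega
  rw [this, G_top h]
  simp

/-- Labellings as a type. -/
abbrev M (k : ℕ) : Type := {a : Fin 27 → ℕ // Mono k a}

/-! ### The Weyl group -/

/-- The flip, as a permutation of labellings. -/
def flipEquiv (k : ℕ) (i : N7) : M k ≃ M k where
  toFun a := ⟨flip k i a.1, flip_mono i a.2⟩
  invFun a := ⟨flip k i a.1, flip_mono i a.2⟩
  left_inv a := Subtype.ext (flip_flip i a.2)
  right_inv a := Subtype.ext (flip_flip i a.2)

lemma weyl_perm (k : ℕ) {w : Matrix N7 N7 ℤ} (hw : w ∈ CL.weyl A7) :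
    ∃ σ : M k ≃ M k, ∀ a, wtv k (σ a).1 = w.mulVec (wtv k a.1) := by
  unfold CL.weyl at hw
  induction hw using Submonoid.closure_induction with
  | mem x hx =>
    obtain ⟨i, rfl⟩ := hx
    exact ⟨flipEquiv k i, fun a => wtv_flip i a.2⟩
  | one => exact ⟨Equiv.refl _, fun a => by simp⟩
  | mul x y _ _ hx hy =>
    obtain ⟨σ, hσ⟩ := hx
    obtain ⟨τ, hτ⟩ := hy
    refine ⟨τ.trans σ, fun a => ?_⟩
    rw [Equiv.trans_apply, hσ, hτ, Matrix.mulVec_mulVec]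

instance (k : ℕ) : Finite (M k) := by
  apply Finite.of_injective
    (fun c : M k => fun x => (⟨c.1 x, Nat.lt_succ_of_le (c.2.1 x)⟩ : Fin (k + 1)))
  intro c d h
  apply Subtype.ext
  funext x
  exact congrArg Fin.val (congrFun h x)

instance (k : ℕ) : Fintype (M k) := Fintype.ofFinite _

/-- Initial segments of the linear extension. -/
def seg (n : ℕ) : Fin 27 → ℕ := fun x => if x.1 < n then 1 else 0

lemma seg_mono (n : ℕ) : Mono 1 (seg n) := by
  constructor
  · intro x; unfold seg; split_ifs <;> omega
  · intro x y hy
    have := up_lt x y hy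
    unfold seg
    split_ifs <;> omega

lemma seg_succ (x : Fin 27) : wtv 1 (seg (x.1 + 1)) = wtv 1 (seg x.1) + A7 (col x) := by
  have : ∀ y : Fin 27, (seg (x.1 + 1) y : ℤ) = seg x.1 y + if y = x then 1 else 0 := by
    intro y
    unfold seg
    split_ifs <;> first | rfl | omega
  funext i
  simp only [wtv, this, add_mul, Finset.sum_add_distrib, Pi.add_apply]
  simp
  ring

lemma col_surj : ∀ i, ∃ x, col x = i := by decide +kernel

lemma row_inj (d : N7 → ℤ) (h : ∀ i, ∑ l, d l * A7 i l = 0) : d = 0 := by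
  have e : ∀ f : N7 → ℤ, ∑ l, f l = f n1 + f n2 + f n3 + f n4 + f n5 + f n5p + f n6p := by
    intro f
    have : (Finset.univ : Finset N7) = {n1, n2, n3, n4, n5, n5p, n6p} := rfl
    rw [this]
    simp
    ring
  simp only [e] at h
  have h1 := h n1
  have h2 := h n2
  have h3 := h n3
  have h4 := h n4
  have h5 := h n5
  have h6 := h n5p
  have h7 := h n6p
  simp [A7, adj7] at h1 h2 h3 h4 h5 h6 h7
  funext i
  cases i <;> simp only [Pi.zero_apply] <;> omega

lemma weyl_finite : (CL.weyl A7 : Set (Matrix N7 N7 ℤ)).Finite := by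
  have hfin : Finite (M 1 → M 1) := inferInstance
  choose σ hσ using fun w : (CL.weyl A7 : Set (Matrix N7 N7 ℤ)) => weyl_perm 1 w.2
  rw [← Set.finite_coe_iff]
  apply Finite.of_injective (fun w => (σ w : M 1 → M 1))
  intro w v hwv
  have hwv' : ∀ a, σ w a = σ v a := fun a => congrFun hwv a
  have hs : ∀ n, w.1.mulVec (wtv 1 (seg n)) = v.1.mulVec (wtv 1 (seg n)) := by
    intro n
    have h1 := hσ w ⟨seg n, seg_mono n⟩
    have h2 := hσ v ⟨seg n, seg_mono n⟩
    rw [← h1, ← h2, hwv']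
  have ha : ∀ i, w.1.mulVec (A7 i) = v.1.mulVec (A7 i) := by
    intro i
    obtain ⟨x, rfl⟩ := col_surj i
    have h1 := hs (x.1 + 1)
    rw [seg_succ, Matrix.mulVec_add, Matrix.mulVec_add, hs x.1] at h1
    exact add_left_cancel h1
  apply Subtype.ext
  funext r
  have := row_inj (fun l => w.1 r l - v.1 r l) (fun i => by
    have := congrFun (ha i) r
    simp only [Matrix.mulVec, dotProduct] at this
    simp only [sub_mul, Finset.sum_sub_distrib]
    rw [this, sub_self])
  funext l
  have := congrFun this l
  simp only [Pi.zero_apply] at this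
  omega

lemma det_refl (i : N7) : (CL.refl A7 i).det = -1 := by
  have : CL.refl A7 i = 1 + Matrix.replicateCol Unit (fun j => - A7 i j) *
      Matrix.replicateRow Unit (Pi.single i (1 : ℤ) : N7 → ℤ) := by
    ext j l
    simp [CL.refl, Matrix.mul_apply, Matrix.one_apply, Pi.single_apply, sub_eq_add_neg]
    split_ifs <;> simp
  rw [this, Matrix.det_one_add_replicateCol_mul_replicateRow]
  simp [A7]

lemma refl_mul_self (i : N7) : CL.refl A7 i * CL.refl A7 i = 1 := by
  apply Matrix.toLin'.injective
  apply LinearMap.ext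
  intro v
  rw [Matrix.toLin'_apply, Matrix.toLin'_apply, ← Matrix.mulVec_mulVec, Matrix.one_mulVec]
  funext j
  rw [refl_mulVec, refl_mulVec, refl_mulVec]
  have : A7 i i = 2 := by simp [A7]
  rw [this]
  ring

lemma refl_mem (i : N7) : CL.refl A7 i ∈ CL.weyl A7 := Submonoid.subset_closure ⟨i, rfl⟩

lemma alt_eq (ν : N7 → ℤ) : CL.alt A7 ν =
    ∑ w ∈ weyl_finite.toFinset, AddMonoidAlgebra.single (Matrix.mulVec w ν) (Matrix.det w) := by
  unfold CL.alt
  exact finsum_mem_eq_finite_toFinset_sum _ _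

lemma alt_refl (i : N7) (ν : N7 → ℤ) :
    CL.alt A7 ((CL.refl A7 i).mulVec ν) = - CL.alt A7 ν := by
  rw [alt_eq, alt_eq, ← Finset.sum_neg_distrib]
  have hm : ∀ w ∈ weyl_finite.toFinset, w * CL.refl A7 i ∈ weyl_finite.toFinset := by
    intro w hw
    rw [Set.Finite.mem_toFinset] at hw ⊢
    exact mul_mem (S := Submonoid (Matrix N7 N7 ℤ)) hw (refl_mem i)
  have hi : ∀ w ∈ weyl_finite.toFinset, w * CL.refl A7 i * CL.refl A7 i = w := by
    intro w _
    rw [mul_assoc, refl_mul_self, mul_one]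
  refine Finset.sum_nbij' (fun w => w * CL.refl A7 i) (fun w => w * CL.refl A7 i) hm hm hi hi ?_
  intro w _
  rw [Matrix.mulVec_mulVec, Matrix.det_mul, det_refl, ← AddMonoidAlgebra.single_neg]
  simp

lemma alt_mul (k : ℕ) :
    CL.alt A7 (fun _ => 1) * ∑ a : M k, AddMonoidAlgebra.single (wtv k a.1) (1 : ℤ) =
      ∑ a : M k, CL.alt A7 (fun j => wtv k a.1 j + 1) := by
  simp only [alt_eq]
  rw [Finset.sum_mul, Finset.sum_comm]
  apply Finset.sum_congr rfl
  intro w hw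
  rw [Set.Finite.mem_toFinset] at hw
  obtain ⟨σ, hσ⟩ := weyl_perm k hw
  rw [← Equiv.sum_comp σ, Finset.mul_sum]
  apply Finset.sum_congr rfl
  intro a _
  rw [AddMonoidAlgebra.single_mul_single, hσ, ← Matrix.mulVec_add, mul_one]
  congr 2
  funext j
  simp [add_comm]

/-- Chosen color. -/
def pick (p : N7 → Prop) : N7 := @Classical.epsilon N7 ⟨n1⟩ p

lemma exists_invol (k : ℕ) : ∃ g : M k → M k, ∀ a : M k, a.1 ≠ (fun _ => k) →
    (g a).1 ≠ (fun _ => k) ∧ g (g a) = a ∧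
    CL.alt A7 (fun j => wtv k (g a).1 j + 1) = - CL.alt A7 (fun j => wtv k a.1 j + 1) := by
  classical
  have hex : ∀ a : M k, ∃ b : M k, a.1 ≠ (fun _ => k) →
      ∃ q, Good k a.1 q (pick (Good k a.1 q)) ∧ b.1 = refl q (pick (Good k a.1 q)) a.1 := by
    intro a
    by_cases hne : a.1 ≠ (fun _ => k)
    · obtain ⟨q, i, hg⟩ := exists_good a.2 hne
      have hp : Good k a.1 q (pick (Good k a.1 q)) := Classical.epsilon_spec ⟨i, hg⟩
      exact ⟨⟨_, refl_mono _ hp.1.le a.2⟩, fun _ => ⟨q, hp, rfl⟩⟩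
    · exact ⟨a, fun h => absurd h hne⟩
  choose g hg using hex
  refine ⟨g, fun a ha => ?_⟩
  obtain ⟨q, hq, hga⟩ := hg a ha
  have hsame : Good k (g a).1 q = Good k a.1 q := by
    funext j
    rw [hga]
    exact propext (hq.refl_iff a.2 j)
  have hgood : Good k (g a).1 q (pick (Good k a.1 q)) := by rw [hsame]; exact hq
  have hne : (g a).1 ≠ (fun _ => k) := by
    intro he
    have h1 := hgood.eq_neg_one (g a).2
    have h2 := hgood.layer_neg
    have hl : layer q (g a).1 = fun _ => 1 := by
      funext x
      rw [he]
      simp [layer, hgood.1]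
    obtain ⟨x, hx⟩ := col_surj (pick (Good k a.1 q))
    rw [hl] at h2
    have key : ∀ i, 0 ≤ wtv 1 (fun _ => 1) i := by
      decide +kernel
    exact absurd h2 (not_lt.2 (key _))
  refine ⟨hne, ?_, ?_⟩
  · obtain ⟨r, hr, hgga⟩ := hg (g a) hne
    have hrq : r = q := hr.level_unique hgood
    subst hrq
    apply Subtype.ext
    rw [hgga, hsame, hga]
    exact hq.refl_refl a.2
  · rw [hga, hq.wt a.2, alt_refl]

lemma wtv_top (k : ℕ) : wtv k (fun _ => k) = fun j => if j = n1 then (k : ℤ) else 0 := by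
  have key : ∀ i, ∑ x, A7 (col x) i = if i = n1 then 2 else 0 := by decide +kernel
  funext j
  unfold wtv
  rw [← Finset.mul_sum, key]
  split_ifs <;> ring

lemma eq_zero_of_eq_neg {x : AddMonoidAlgebra ℤ (N7 → ℤ)} (h : x = -x) : x = 0 := by
  ext m
  have := congrArg (fun y : AddMonoidAlgebra ℤ (N7 → ℤ) => y.coeff m) h
  simp only [AddMonoidAlgebra.coeff_neg, Finsupp.neg_apply] at this
  simp only [AddMonoidAlgebra.coeff_zero, Finsupp.zero_apply]
  omega

lemma sum_alt (k : ℕ) : ∑ a : M k, CL.alt A7 (fun j => wtv k a.1 j + 1) =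
    CL.alt A7 (fun j => (if j = n1 then (k : ℤ) else 0) + 1) := by
  classical
  obtain ⟨g, hg⟩ := exists_invol k
  let T : M k := ⟨fun _ => k, fun _ => le_rfl, fun _ _ _ => le_rfl⟩
  rw [← Finset.add_sum_erase _ _ (Finset.mem_univ T)]
  have hz : ∑ a ∈ Finset.univ.erase T, CL.alt A7 (fun j => wtv k a.1 j + 1) = 0 := by
    have hne : ∀ a ∈ Finset.univ.erase T, a.1 ≠ (fun _ => k) := by
      intro a ha he
      exact (Finset.mem_erase.1 ha).1 (Subtype.ext he)
    refine Finset.sum_involution (fun a _ => g a) ?_ ?_ ?_ ?_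
    · intro a ha
      rw [(hg a (hne a ha)).2.2]; simp
    · intro a ha h0 he
      have := (hg a (hne a ha)).2.2
      rw [he] at this
      exact h0 (eq_zero_of_eq_neg this)
    · intro a ha
      refine Finset.mem_erase.2 ⟨fun e => (hg a (hne a ha)).1 (congrArg Subtype.val e),
        Finset.mem_univ _⟩
    · intro a ha
      exact (hg a (hne a ha)).2.1
  rw [hz, add_zero]
  show CL.alt A7 (fun j => wtv k (fun _ => k) j + 1) = _
  rw [wtv_top]

/-! ### Transport to `L7 k` -/

/-- The indexing of the positions, as an equivalence. -/
def en : Fin 27 ≃ {x : N7 × ℕ // x ∈ pos7} :=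
  Equiv.ofBijective (fun x => ⟨pt x, pt_mem x⟩)
    ⟨fun x y h => pt_inj x y (congrArg Subtype.val h), fun p => by
      obtain ⟨x, hx⟩ := pt_surj p.1 p.2
      exact ⟨x, Subtype.ext hx⟩⟩

lemma en_val (x : Fin 27) : (en x).1 = pt x := rfl

lemma ple_mono {K : ℕ} {a : Fin 27 → ℕ} (h : Mono K a) {p q : N7 × ℕ}
    (hpq : CL.ple adj7 pos7 p q) :
    ∀ hp hq, a (en.symm ⟨q, hq⟩) ≤ a (en.symm ⟨p, hp⟩) := by
  induction hpq with
  | refl => intro _ _; exact le_rfl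
  | @tail b c _ hbc ih =>
    intro hp hq
    refine le_trans ?_ (ih hp hbc.1)
    apply h.2
    rw [up_iff, ← en_val, ← en_val, Equiv.apply_symm_apply, Equiv.apply_symm_apply]
    exact hbc.2.2

/-- `L7 k` in terms of labellings of `Fin 27`. -/
def toM (k : ℕ) : L7 k ≃ M k where
  toFun t := ⟨fun x => t.1 (en x), fun x => t.2.1 (en x), fun x y hy => by
    apply t.2.2.1
    apply Relation.ReflTransGen.single
    exact ⟨pt_mem x, pt_mem y, (up_iff x y).1 hy⟩⟩
  invFun a := ⟨fun p => a.1 (en.symm p), fun p => a.2.1 _,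
    fun x y hxy => ple_mono a.2 hxy y.2 x.2, trivial⟩
  left_inv t := by
    apply Subtype.ext
    funext p
    simp
  right_inv a := by
    apply Subtype.ext
    funext x
    simp

lemma toM_apply {k : ℕ} (t : L7 k) (x : Fin 27) : (toM k t).1 x = t.1 (en x) := rfl

lemma rk_eq {k : ℕ} (t : L7 k) : CL.rk t = ∑ x, (toM k t).1 x := by
  unfold CL.rk
  rw [← Finset.univ_eq_attach, ← Equiv.sum_comp en]
  rfl

lemma edge_iff {k : ℕ} (i : N7) (r s : L7 k) : CL.edge i r s ↔
    ∃ x, col x = i ∧ (toM k s).1 x = (toM k r).1 x + 1 ∧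
      ∀ y, y ≠ x → (toM k s).1 y = (toM k r).1 y := by
  constructor
  · rintro ⟨p, h1, h2, h3⟩
    obtain ⟨x, rfl⟩ := en.surjective p
    refine ⟨x, ?_, h2, fun y hy => h3 _ (fun e => hy (en.injective e))⟩
    rw [← pt_fst]; exact h1
  · rintro ⟨x, h1, h2, h3⟩
    refine ⟨en x, ?_, h2, fun p hp => ?_⟩
    · rw [en_val, pt_fst]; exact h1
    · obtain ⟨y, rfl⟩ := en.surjective p
      exact h3 y (fun e => hp (congrArg en e))

lemma comp_agree {k : ℕ} {i : N7} {t s : L7 k} (h : s ∈ CL.comp i t) :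
    ∀ x, col x ≠ i → (toM k s).1 x = (toM k t).1 x := by
  change Relation.ReflTransGen _ t s at h
  induction h with
  | refl => intro _ _; rfl
  | @tail b c _ hbc ih =>
    intro x hx
    rw [← ih x hx]
    rcases hbc with hbc | hbc
    · obtain ⟨y, h1, _, h3⟩ := (edge_iff i _ _).1 hbc
      exact h3 x (fun e => hx (e ▸ h1))
    · obtain ⟨y, h1, _, h3⟩ := (edge_iff i _ _).1 hbc
      exact (h3 x (fun e => hx (e ▸ h1))).symm

lemma update_mono {K : ℕ} {a : Fin 27 → ℕ} (h : Mono K a) {x : Fin 27} {v : ℕ}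
    (h1 : lo a x ≤ v) (h2 : v ≤ hi K a x) : Mono K (Function.update a x v) := by
  constructor
  · intro y
    by_cases hy : y = x
    · subst hy; rw [Function.update_self]; exact h2.trans hi_le_K
    · rw [Function.update_of_ne hy]; exact h.1 y
  · intro y z hz
    by_cases hy : y = x
    · subst hy
      rw [Function.update_self, Function.update_of_ne (up_lt y z hz).ne']
      exact (le_lo hz).trans h1
    · rw [Function.update_of_ne hy]
      by_cases hzx : z = x
      · subst hzx
        rw [Function.update_self]
        exact h2.trans (hi_le ((dn_iff z y).2 hz))
      · rw [Function.update_of_ne hzx]; exact h.2 y z hz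

lemma mwt_eq {k : ℕ} (i : N7) (t : L7 k) : CL.mwt i t = wtv k (toM k t).1 i := by
  have htt : t ∈ CL.comp i t := Relation.ReflTransGen.refl
  have hne : (CL.rk '' CL.comp i t).Nonempty := ⟨_, t, htt, rfl⟩
  have hbd : BddAbove (CL.rk '' CL.comp i t) := ((Set.toFinite _).image _).bddAbove
  obtain ⟨s, hs, hsr⟩ := Nat.sInf_mem hne
  obtain ⟨u, hu, hur⟩ := Nat.sSup_mem hne hbd
  have hsx : ∀ x, col x = i → (toM k s).1 x = lo (toM k t).1 x := by
    intro x hx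
    rw [← lo_congr (comp_agree hs) hx]
    by_contra hn
    have hm := (toM k s).2
    have h1 := hm.lo_le x
    have h2 := hm.le_hi x
    have hup : Mono k (Function.update (toM k s).1 x ((toM k s).1 x - 1)) :=
      update_mono hm (by omega) (by omega)
    obtain ⟨v, hv0⟩ := (toM k).surjective ⟨_, hup⟩
    have hv := congrArg Subtype.val hv0
    simp only at hv
    have hvs : ∀ y, y ≠ x → (toM k s).1 y = (toM k v).1 y := by
      intro y hy; rw [hv, Function.update_of_ne hy]
    have hvx : (toM k s).1 x = (toM k v).1 x + 1 := by
      rw [hv, Function.update_self]; omega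
    have hvc : v ∈ CL.comp i t :=
      Relation.ReflTransGen.tail hs (Or.inr ((edge_iff i v s).2 ⟨x, hx, hvx, hvs⟩))
    have hle : sInf (CL.rk '' CL.comp i t) ≤ CL.rk v := Nat.sInf_le ⟨v, hvc, rfl⟩
    rw [← hsr, rk_eq, rk_eq] at hle
    have : ∑ y, (toM k v).1 y < ∑ y, (toM k s).1 y := by
      apply Finset.sum_lt_sum
      · intro y _
        by_cases hy : y = x
        · rw [hy, hvx]; omega
        · rw [hvs y hy]
      · exact ⟨x, Finset.mem_univ _, by rw [hvx]; omega⟩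
    omega
  have hux : ∀ x, col x = i → (toM k u).1 x = hi k (toM k t).1 x := by
    intro x hx
    rw [← hi_congr (comp_agree hu) hx]
    by_contra hn
    have hm := (toM k u).2
    have h1 := hm.lo_le x
    have h2 := hm.le_hi x
    have hup : Mono k (Function.update (toM k u).1 x ((toM k u).1 x + 1)) :=
      update_mono hm (by omega) (by omega)
    obtain ⟨v, hv0⟩ := (toM k).surjective ⟨_, hup⟩
    have hv := congrArg Subtype.val hv0
    simp only at hv
    have hvs : ∀ y, y ≠ x → (toM k v).1 y = (toM k u).1 y := by
      intro y hy; rw [hv, Function.update_of_ne hy]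
    have hvx : (toM k v).1 x = (toM k u).1 x + 1 := by
      rw [hv, Function.update_self]
    have hvc : v ∈ CL.comp i t :=
      Relation.ReflTransGen.tail hu (Or.inl ((edge_iff i u v).2 ⟨x, hx, hvx, hvs⟩))
    have hle : CL.rk v ≤ sSup (CL.rk '' CL.comp i t) := le_csSup hbd ⟨v, hvc, rfl⟩
    rw [← hur, rk_eq, rk_eq] at hle
    have : ∑ y, (toM k u).1 y < ∑ y, (toM k v).1 y := by
      apply Finset.sum_lt_sum
      · intro y _
        by_cases hy : y = x
        · rw [hy, hvx]; omega
        · rw [hvs y hy]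
      · exact ⟨x, Finset.mem_univ _, by rw [hvx]; omega⟩
    omega
  unfold CL.mwt
  rw [← hsr, ← hur, rk_eq, rk_eq, rk_eq, wtv_eq (toM k t).2]
  push_cast
  rw [← Finset.sum_sub_distrib, ← Finset.sum_sub_distrib, ← Finset.sum_sub_distrib]
  apply Finset.sum_congr rfl
  intro x _
  by_cases hx : col x = i
  · rw [if_pos hx, hsx x hx, hux x hx]; ring
  · rw [if_neg hx, comp_agree hs x hx, comp_agree hu x hx]; ring

lemma wgf_eq (k : ℕ) : CL.wgf adj7 pos7 k (fun _ => True) =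
    ∑ a : M k, AddMonoidAlgebra.single (wtv k a.1) (1 : ℤ) := by
  unfold CL.wgf
  refine Fintype.sum_equiv (toM k) _ _ (fun t => ?_)
  congr 1
  funext i
  exact mwt_eq i t

end E7P

/-- the Weyl group of `E₇` is finite and
`𝒜(Z^ϱ)·WGF(L7(k);Z) = 𝒜(Z^{kω₁+ϱ})` in `ℤ[ℤ^7]`. -/
theorem statement_4 (k : ℕ) :
    ((CL.weyl A7 : Set (Matrix N7 N7 ℤ)).Finite) ∧
    CL.alt A7 (fun _ => 1) * CL.wgf adj7 pos7 k (fun _ => True) =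
      CL.alt A7 (fun j => (if j = n1 then (k : ℤ) else 0) + 1) := by
  refine ⟨E7P.weyl_finite, ?_⟩
  rw [E7P.wgf_eq, E7P.alt_mul, E7P.sum_alt]

end
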